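/- There exists a finite set G of unary constraints such that the binary constraint Implies = (1,1,0,1) is T-constructible from G ∪ {OR}, where OR = [0,1,1]. (Explicitly, G = {[1,−1/2], [2,−2/3], [1,−1/8]} works.) -/

import Mathlib

/-- A (complex-valued Boolean) constraint of arity `k`. -/
abbrev Constraint (k : ℕ) : Type := (Fin k → Bool) → ℂ

/-- The binary equality constraint `EQ = [1,0,1]`, as a two-argument function. -/
def EQc : Bool → Bool → ℂ := fun a b => if a = b then 1 else 0

/-- The binary disequality constraint `XOR = [0,1,0]`, as a two-argument function. -/
def XORc : Bool → Bool → ℂ := fun a b => if a = b then 0 else 1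

/-- The binary constraint `Implies = (1,1,0,1)`, as a two-argument function. -/
def IMPc : Bool → Bool → ℂ := fun a b => if a = true ∧ b = false then 0 else 1

/-- The unary constraint `[a, b]` (value `a` on input `0`, value `b` on input `1`). -/
def unC (a b : ℂ) : Constraint 1 := fun x => if x 0 then b else a

/-- The binary constraint `(a,b,c,d) = (f(0,0), f(0,1), f(1,0), f(1,1))`. -/
def binC (a b c d : ℂ) : Constraint 2 := fun x =>
  if x 0 then (if x 1 then d else c) else (if x 1 then b else a)

/-- `OR = [0,1,1]`. -/
def ORc : Constraint 2 := binC 0 1 1 1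

/-- `Implies = (1,1,0,1)` as a binary constraint. -/
def Impliesc : Constraint 2 := binC 1 1 0 1

/-- Membership in `NZ`: the constraint is everywhere nonzero. -/
def inNZ {k : ℕ} (f : Constraint k) : Prop := ∀ x, f x ≠ 0

/-- Membership in `DG`: the constraint is a product of unary constraints, one per variable. -/
def inDG {k : ℕ} (f : Constraint k) : Prop :=
  ∃ g : Fin k → Bool → ℂ, ∀ x, f x = ∏ i, g i (x i)

/-- Membership in `ED`: the constraint is a product of at least one factor, each factor
being a unary constraint applied to some variable, or `EQ`/`XOR` applied to two variables. -/
def inED {k : ℕ} (f : Constraint k) : Prop :=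
  ∃ (l1 l2 : ℕ) (h : Fin l1 → Bool → ℂ) (j : Fin l1 → Fin k)
    (g : Fin l2 → Bool → Bool → ℂ) (m n : Fin l2 → Fin k),
    1 ≤ l1 + l2 ∧ (∀ i, g i = EQc ∨ g i = XORc) ∧
    ∀ x, f x = (∏ i, h i (x (j i))) * ∏ i, g i (x (m i)) (x (n i))

/-- Membership in `IM`: `f ∉ NZ` and `f` is a product of at least one factor, each factor
being a unary constraint applied to some variable, or `Implies` applied to two variables. -/
def inIM {k : ℕ} (f : Constraint k) : Prop :=
  ¬ inNZ f ∧
  ∃ (l1 l2 : ℕ) (h : Fin l1 → Bool → ℂ) (j : Fin l1 → Fin k)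
    (m n : Fin l2 → Fin k),
    1 ≤ l1 + l2 ∧
    ∀ x, f x = (∏ i, h i (x (j i))) * ∏ i, IMPc (x (m i)) (x (n i))

/-- The underlying relation `R_f = {x : f x ≠ 0}` of a constraint `f`. -/
def relOf {k : ℕ} (f : Constraint k) : Set (Fin k → Bool) := {x | f x ≠ 0}

/-- Factors allowed in an IMP-style factorization of a relation:
`Δ_c(x_i)` or `Implies(x_i, x_j)`. -/
inductive ImpFactor (k : ℕ) where
  | delta (c : Bool) (i : Fin k)
  | imp (i j : Fin k)
deriving DecidableEq

/-- Evaluation of an IMP-factor at an assignment. -/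
def ImpFactor.eval {k : ℕ} : ImpFactor k → (Fin k → Bool) → Bool
  | .delta c i, x => x i == c
  | .imp i j, x => !(x i) || x j

/-- `L` is a factor list for the relation `R`: the conjunction of the factors in `L` equals `R`. -/
def isFactorListFor {k : ℕ} (L : List (ImpFactor k)) (R : Set (Fin k → Bool)) : Prop :=
  ∀ x, x ∈ R ↔ ∀ fac ∈ L, fac.eval x = true

/-- Membership in `IMP`: the relation is the conjunction of a positive number of factors of the
forms `Δ_0(x)`, `Δ_1(x)`, `Implies(x,y)`. -/
def inIMP {k : ℕ} (R : Set (Fin k → Bool)) : Prop :=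
  ∃ L : List (ImpFactor k), L ≠ [] ∧ isFactorListFor L R

/-- `f` has imp support when `R_f ∈ IMP`. -/
def hasImpSupport {k : ℕ} (f : Constraint k) : Prop := inIMP (relOf f)

/-- A factor list is imp-distinctive if no variable occurs both in a `Δ_c` factor and in an
`Implies` factor, and no factor `Implies(x,x)` occurs. -/
def impDistinctive {k : ℕ} (L : List (ImpFactor k)) : Prop :=
  (∀ i : Fin k, ¬ ((∃ c, ImpFactor.delta c i ∈ L) ∧
      (∃ j, ImpFactor.imp i j ∈ L ∨ ImpFactor.imp j i ∈ L))) ∧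
  (∀ i : Fin k, ImpFactor.imp i i ∉ L)

/-- Factors of the forms `Δ_c(x_i)` or `EQ(x_i,x_j)`. -/
inductive EqFactor (k : ℕ) where
  | delta (c : Bool) (i : Fin k)
  | eq (i j : Fin k)
deriving DecidableEq

/-- Evaluation of such a factor at an assignment. -/
def EqFactor.eval {k : ℕ} : EqFactor k → (Fin k → Bool) → Bool
  | .delta c i, x => x i == c
  | .eq i j, x => x i == x j

/-- `f` is in simple form: its representing Boolean matrix (rows indexed by `R_f`) has
no all-`0` column, no all-`1` column, and no two identical columns. -/
def simpleForm {k : ℕ} (f : Constraint k) : Prop :=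
  (∀ i : Fin k, ∃ a, f a ≠ 0 ∧ a i = true) ∧
  (∀ i : Fin k, ∃ a, f a ≠ 0 ∧ a i = false) ∧
  (∀ i j : Fin k, i ≠ j → ∃ a, f a ≠ 0 ∧ a i ≠ a j)

/-- A constraint of unspecified arity. -/
abbrev Ctr : Type := Σ k : ℕ, Constraint k

/-- T-constructibility of a constraint from a set `G` of constraints, by finitely many
applications of permutation, pinning, projection, linking, expansion, multiplication,
and normalization. -/
inductive TCon (G : Set Ctr) : Ctr → Prop where
  | base {c : Ctr} : c ∈ G → TCon G c
  | perm {k : ℕ} {g : Constraint k} (σ : Equiv.Perm (Fin k)) :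
      TCon G ⟨k, g⟩ → TCon G ⟨k, fun x => g (fun i => x (σ i))⟩
  | pinning {k : ℕ} {g : Constraint (k+1)} (i : Fin (k+1)) (c : Bool) :
      TCon G ⟨k+1, g⟩ → TCon G ⟨k, fun x => g (i.insertNth c x)⟩
  | proj {k : ℕ} {g : Constraint (k+1)} (i : Fin (k+1)) :
      TCon G ⟨k+1, g⟩ →
      TCon G ⟨k, fun x => g (i.insertNth false x) + g (i.insertNth true x)⟩
  | link {k : ℕ} {g : Constraint (k+1)} (i : Fin (k+1)) (j : Fin k) :
      TCon G ⟨k+1, g⟩ → TCon G ⟨k, fun x => g (i.insertNth (x j) x)⟩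
  | expand {k : ℕ} {g : Constraint k} (i : Fin (k+1)) :
      TCon G ⟨k, g⟩ → TCon G ⟨k+1, fun x => g (fun j => x (i.succAbove j))⟩
  | mul {k : ℕ} {g₁ g₂ : Constraint k} :
      TCon G ⟨k, g₁⟩ → TCon G ⟨k, g₂⟩ → TCon G ⟨k, fun x => g₁ x * g₂ x⟩
  | norm {k : ℕ} {g : Constraint k} (lam : ℂ) (hlam : lam ≠ 0) :
      TCon G ⟨k, g⟩ → TCon G ⟨k, fun x => lam * g x⟩

/-- T-constructibility using no projection operation. -/
inductive TConNoProj (G : Set Ctr) : Ctr → Prop where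
  | base {c : Ctr} : c ∈ G → TConNoProj G c
  | perm {k : ℕ} {g : Constraint k} (σ : Equiv.Perm (Fin k)) :
      TConNoProj G ⟨k, g⟩ → TConNoProj G ⟨k, fun x => g (fun i => x (σ i))⟩
  | pinning {k : ℕ} {g : Constraint (k+1)} (i : Fin (k+1)) (c : Bool) :
      TConNoProj G ⟨k+1, g⟩ → TConNoProj G ⟨k, fun x => g (i.insertNth c x)⟩
  | link {k : ℕ} {g : Constraint (k+1)} (i : Fin (k+1)) (j : Fin k) :
      TConNoProj G ⟨k+1, g⟩ → TConNoProj G ⟨k, fun x => g (i.insertNth (x j) x)⟩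
  | expand {k : ℕ} {g : Constraint k} (i : Fin (k+1)) :
      TConNoProj G ⟨k, g⟩ → TConNoProj G ⟨k+1, fun x => g (fun j => x (i.succAbove j))⟩
  | mul {k : ℕ} {g₁ g₂ : Constraint k} :
      TConNoProj G ⟨k, g₁⟩ → TConNoProj G ⟨k, g₂⟩ →
      TConNoProj G ⟨k, fun x => g₁ x * g₂ x⟩
  | norm {k : ℕ} {g : Constraint k} (lam : ℂ) (hlam : lam ≠ 0) :
      TConNoProj G ⟨k, g⟩ → TConNoProj G ⟨k, fun x => lam * g x⟩

/-- Pinning the `i`-th variable of `f` to the bit `c`. -/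
def pinC {k : ℕ} (f : Constraint (k+1)) (i : Fin (k+1)) (c : Bool) : Constraint k :=
  fun x => f (i.insertNth c x)

/-- `R_f` admits a good factor list: a factor list consisting only of `Implies` factors,
in which every variable is incident to at least one edge of the induced imp graph,
and whose imp graph has no (directed) cycle. -/
def hasGoodFactorList {k : ℕ} (f : Constraint k) : Prop :=
  ∃ L : List (ImpFactor k),
    isFactorListFor L (relOf f) ∧
    (∀ fac ∈ L, ∃ i j, fac = ImpFactor.imp i j) ∧
    (∀ i : Fin k, ∃ j, ImpFactor.imp i j ∈ L ∨ ImpFactor.imp j i ∈ L) ∧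
    ¬ ∃ i : Fin k, Relation.TransGen (fun a b => ImpFactor.imp a b ∈ L) i i

/-! Read the truth table of a binary constraint as a `2 × 2` matrix. Identifying and projecting out
a shared variable multiplies matrices, and multiplying by a unary constraint `[a, b]` multiplies
by `diag(a, b)` on the left or on the right. Implies is then reached in two steps. Inserting
`diag(-1, 1)` between two copies of OR makes the two paths from `1` to `1` cancel, which produces
NAND; and NAND times OR is `(1, 2, 0, 1)`, in which scaling the second row by `2` and the second
column by `1/2` makes all nonzero entries equal to `1`. -/

open Matrix

/-- The binary constraint with truth table `M`: the value of the first variable selects the row and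
that of the second the column, index `0` standing for `false`. It turns the composition of binary
constraints into matrix multiplication. -/
def matC (M : Matrix (Fin 2) (Fin 2) ℂ) : Constraint 2 :=
  binC (M 0 0) (M 0 1) (M 1 0) (M 1 1)

theorem matC_mul_apply (M N : Matrix (Fin 2) (Fin 2) ℂ) (x : Fin 2 → Bool) :
    matC (M * N) x =
      matC M ![x 0, false] * matC N ![false, x 1] + matC M ![x 0, true] * matC N ![true, x 1] := by
  cases h₀ : x 0 <;> cases h₁ : x 1 <;> simp [matC, binC, mul_apply, Fin.sum_univ_two, h₀, h₁]

theorem matC_diagonal_mul_apply (a b : ℂ) (M : Matrix (Fin 2) (Fin 2) ℂ) (x : Fin 2 → Bool) :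
    matC (diagonal ![a, b] * M) x = unC a b (fun _ => x 0) * matC M x := by
  cases h₀ : x 0 <;> cases h₁ : x 1 <;> simp [matC, binC, unC, h₀, h₁]

theorem matC_mul_diagonal_apply (M : Matrix (Fin 2) (Fin 2) ℂ) (a b : ℂ) (x : Fin 2 → Bool) :
    matC (M * diagonal ![a, b]) x = matC M x * unC a b (fun _ => x 1) := by
  cases h₀ : x 0 <;> cases h₁ : x 1 <;> simp [matC, binC, unC, h₀, h₁]

namespace TCon

variable {G : Set Ctr}

theorem congr {k : ℕ} {f g : Constraint k} (hf : TCon G ⟨k, f⟩) (hfg : ∀ x, f x = g x) :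
    TCon G ⟨k, g⟩ :=
  funext hfg ▸ hf

theorem unary_at {u : Constraint 1} (hu : TCon G ⟨1, u⟩) :
    ∀ {k : ℕ} (i : Fin k), TCon G ⟨k, fun x => u fun _ => x i⟩
  | 1, i => hu.congr fun x => congrArg u (funext fun j => congrArg x (Subsingleton.elim j i))
  | k + 2, i => by
    obtain ⟨j, hj⟩ := exists_ne i
    obtain ⟨i', rfl⟩ := Fin.exists_succAbove_eq hj.symm
    exact (hu.unary_at i').expand j

theorem comp {f g : Constraint 2} (hf : TCon G ⟨2, f⟩) (hg : TCon G ⟨2, g⟩) :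
    TCon G ⟨2, fun x => f ![x 0, false] * g ![false, x 1] + f ![x 0, true] * g ![true, x 1]⟩ := by
  -- the shared variable `y` of `f(x₀, y)` and `g(y, x₁)` is the middle one of `(x₀, y, x₁)`
  refine ((hf.expand 2).mul (hg.expand 0)).proj 1 |>.congr fun x => ?_
  have restrict_left (c : Bool) :
      (fun j => (1 : Fin 3).insertNth (α := fun _ => Bool) c x ((2 : Fin 3).succAbove j)) =
        ![x 0, c] := by
    funext j; fin_cases j <;> rfl
  have restrict_right (c : Bool) :
      (fun j => (1 : Fin 3).insertNth (α := fun _ => Bool) c x ((0 : Fin 3).succAbove j)) =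
        ![c, x 1] := by
    funext j; fin_cases j <;> rfl
  simp only [restrict_left, restrict_right]

theorem matC_mul {M N : Matrix (Fin 2) (Fin 2) ℂ} (hM : TCon G ⟨2, matC M⟩)
    (hN : TCon G ⟨2, matC N⟩) : TCon G ⟨2, matC (M * N)⟩ :=
  (hM.comp hN).congr fun x => (matC_mul_apply M N x).symm

theorem matC_diagonal_mul {a b : ℂ} {M : Matrix (Fin 2) (Fin 2) ℂ} (hu : TCon G ⟨1, unC a b⟩)
    (hM : TCon G ⟨2, matC M⟩) : TCon G ⟨2, matC (diagonal ![a, b] * M)⟩ :=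
  ((hu.unary_at 0).mul hM).congr fun x => (matC_diagonal_mul_apply a b M x).symm

theorem matC_mul_diagonal {M : Matrix (Fin 2) (Fin 2) ℂ} {a b : ℂ} (hM : TCon G ⟨2, matC M⟩)
    (hu : TCon G ⟨1, unC a b⟩) : TCon G ⟨2, matC (M * diagonal ![a, b])⟩ :=
  (hM.mul (hu.unary_at 1)).congr fun x => (matC_mul_diagonal_apply M a b x).symm

theorem nand_of_or (hor : TCon G ⟨2, ORc⟩) (hneg : TCon G ⟨1, unC (-1) 1⟩) :
    TCon G ⟨2, binC 1 1 1 0⟩ := by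
  change TCon G ⟨2, matC !![0, 1; 1, 1]⟩ at hor
  have nand_eq : (!![1, 1; 1, 0] : Matrix _ _ ℂ) =
      !![0, 1; 1, 1] * diagonal ![-1, 1] * !![0, 1; 1, 1] := by
    simp [diagonal_fin_two]
  change TCon G ⟨2, matC !![1, 1; 1, 0]⟩
  rw [nand_eq]
  exact (hor.matC_mul_diagonal hneg).matC_mul hor

theorem implies_of_nand_of_or (hnand : TCon G ⟨2, binC 1 1 1 0⟩) (hor : TCon G ⟨2, ORc⟩)
    (hrow : TCon G ⟨1, unC 1 2⟩) (hcol : TCon G ⟨1, unC 1 (1 / 2)⟩) :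
    TCon G ⟨2, Impliesc⟩ := by
  change TCon G ⟨2, matC !![1, 1; 1, 0]⟩ at hnand
  change TCon G ⟨2, matC !![0, 1; 1, 1]⟩ at hor
  have implies_eq : (!![1, 1; 0, 1] : Matrix _ _ ℂ) =
      diagonal ![1, 2] * (!![1, 1; 1, 0] * !![0, 1; 1, 1]) * diagonal ![1, 1 / 2] := by
    norm_num [diagonal_fin_two]
  change TCon G ⟨2, matC !![1, 1; 0, 1]⟩
  rw [implies_eq]
  exact (matC_diagonal_mul hrow (hnand.matC_mul hor)).matC_mul_diagonal hcol

end TCon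

/-- There exists a finite set `G` of unary constraints such that
`Implies = (1,1,0,1)` is T-constructible from `G ∪ {OR}`. -/
theorem stmt5 : ∃ G : Set Ctr, G.Finite ∧ (∀ c ∈ G, c.1 = 1) ∧
    TCon (G ∪ {⟨2, ORc⟩}) ⟨2, Impliesc⟩ := by
  let U : Set Ctr := {⟨1, unC (-1) 1⟩, ⟨1, unC 1 2⟩, ⟨1, unC 1 (1 / 2)⟩}
  refine ⟨U, by simp [U], by simp [U], ?_⟩
  have hor : TCon (U ∪ {⟨2, ORc⟩}) ⟨2, ORc⟩ := .base (by simp)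
  have hneg : TCon (U ∪ {⟨2, ORc⟩}) ⟨1, unC (-1) 1⟩ := .base (by simp [U])
  have hrow : TCon (U ∪ {⟨2, ORc⟩}) ⟨1, unC 1 2⟩ := .base (by simp [U])
  have hcol : TCon (U ∪ {⟨2, ORc⟩}) ⟨1, unC 1 (1 / 2)⟩ := .base (by simp [U])
  exact (hor.nand_of_or hneg).implies_of_nand_of_or hor hrow hcol
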